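/- Let λ > -1/2 and let j, k be integers with 1 ≤ j < k. (i) If -1/2 < λ ≤ 0 or λ ≥ 1, then ((j-1/2)/(k-1/2))^{2λ-2} ≤ β̃_k²/β̃_j² ≤ ((j-1/2+λ)/(k-1/2+λ))^{2λ-2}. (ii) If 0 < λ ≤ 1, then ((j-1/2)/(k-1/2))^{2λ-2} ≥ β̃_k²/β̃_j² ≥ ((j-1/2+λ)/(k-1/2+λ))^{2λ-2}. -/

import Mathlib

/-- `h_x^2 = Γ(x+2λ)/((x+λ)Γ(x+1))`. -/
noncomputable def hsq (lam x : ℝ) : ℝ :=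
  Real.Gamma (x + 2*lam) / ((x + lam) * Real.Gamma (x + 1))

/-- `α_k = (2k-1+λ) h_{2k-1}`. -/
noncomputable def gegAlpha (lam : ℝ) (k : ℕ) : ℝ :=
  (2*(k:ℝ) - 1 + lam) * Real.sqrt (hsq lam (2*(k:ℝ) - 1))

/-- `β_k = 1/h_{2k}`. -/
noncomputable def gegBeta (lam : ℝ) (k : ℕ) : ℝ :=
  1 / Real.sqrt (hsq lam (2*(k:ℝ)))

/-- `α̃_k^2 = ((2k-2+λ) h_{2k-2})^2`, with `α̃_1^2 = λΓ(2λ) = Γ(2λ+1)/2`. -/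
noncomputable def gegAlphaTildeSq (lam : ℝ) (k : ℕ) : ℝ :=
  if k = 1 then Real.Gamma (2*lam + 1) / 2
  else (2*(k:ℝ) - 2 + lam)^2 * hsq lam (2*(k:ℝ) - 2)

/-- `β̃_k = 1/h_{2k-1}`. -/
noncomputable def gegBetaTilde (lam : ℝ) (k : ℕ) : ℝ :=
  1 / Real.sqrt (hsq lam (2*(k:ℝ) - 1))

/-- The matrix `A_m` with entries `a_{kj} = (Σ_{i=1}^{min(k,j)} α_i^2) β_k β_j` (1-based). -/
noncomputable def Amat (lam : ℝ) (m : ℕ) : Matrix (Fin m) (Fin m) ℝ :=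
  fun k j => (∑ i ∈ Finset.Icc 1 (min (k.val+1) (j.val+1)), (gegAlpha lam i)^2) *
    gegBeta lam (k.val+1) * gegBeta lam (j.val+1)

/-- The matrix `Ã_m` with entries `ã_{kj} = (Σ_{i=1}^{min(k,j)} α̃_i^2) β̃_k β̃_j` (1-based). -/
noncomputable def AmatTilde (lam : ℝ) (m : ℕ) : Matrix (Fin m) (Fin m) ℝ :=
  fun k j => (∑ i ∈ Finset.Icc 1 (min (k.val+1) (j.val+1)), gegAlphaTildeSq lam i) *
    gegBetaTilde lam (k.val+1) * gegBetaTilde lam (j.val+1)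

/-- `B_n = 4 A_m` for `n = 2m` and `B_n = 4 Ã_m` for `n = 2m-1`; in both cases `m = (n+1)/2`. -/
noncomputable def Bmat (lam : ℝ) (n : ℕ) : Matrix (Fin ((n+1)/2)) (Fin ((n+1)/2)) ℝ :=
  if n % 2 = 0 then (4:ℝ) • Amat lam ((n+1)/2) else (4:ℝ) • AmatTilde lam ((n+1)/2)

/-- Maximum absolute row-sum norm. -/
noncomputable def rowSumNorm {m : ℕ} (A : Matrix (Fin m) (Fin m) ℝ) : ℝ :=
  ⨆ k, ∑ j, |A k j|

/-- Squared Frobenius norm. -/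
noncomputable def frobSq {m : ℕ} (A : Matrix (Fin m) (Fin m) ℝ) : ℝ :=
  ∑ k, ∑ j, (A k j)^2

/-- Position of a convex function with zeros `0` and `1` relative to the axis. -/
theorem ConvexOn.sign_of_zero_one {s : Set ℝ} {f : ℝ → ℝ} (hf : ConvexOn ℝ s f)
    (h0s : (0 : ℝ) ∈ s) (h1s : (1 : ℝ) ∈ s) (h0 : f 0 = 0) (h1 : f 1 = 0) {t : ℝ} (ht : t ∈ s) :
    (t ≤ 0 ∨ 1 ≤ t → 0 ≤ f t) ∧ (0 ≤ t → t ≤ 1 → f t ≤ 0) := by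
  refine ⟨?_, fun ht0 ht1 => ?_⟩
  · rintro (h | h)
    · have h1t : 0 < 1 - t := by linarith
      have key := hf.2 ht h1s (show 0 ≤ 1 / (1 - t) by positivity)
        (show 0 ≤ -t / (1 - t) from div_nonneg (by linarith) h1t.le) (by field_simp; ring)
      have harg : (1 / (1 - t)) • t + (-t / (1 - t)) • (1 : ℝ) = 0 := by
        simp only [smul_eq_mul]; field_simp; ring
      rw [harg, h0, h1, smul_zero, add_zero, smul_eq_mul] at key
      exact nonneg_of_mul_nonneg_right key (by positivity)
    · have htp : 0 < t := by linarith
      have key := hf.2 h0s ht (show 0 ≤ (t - 1) / t from div_nonneg (by linarith) htp.le)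
        (show 0 ≤ 1 / t by positivity) (by field_simp; ring)
      have harg : ((t - 1) / t) • (0 : ℝ) + (1 / t) • t = 1 := by
        simp only [smul_eq_mul]; field_simp; ring
      rw [harg, h0, h1, smul_zero, zero_add, smul_eq_mul] at key
      exact nonneg_of_mul_nonneg_right key (by positivity)
  · have key := hf.2 h0s h1s (show 0 ≤ 1 - t by linarith) ht0 (by ring)
    simpa [h0, h1] using key

/-- A difference of logarithms of affine functions is convex where the subtracted one has the
larger logarithmic derivative in absolute value. -/
theorem convexOn_log_sub_log_affine {s : Set ℝ} (hs : Convex ℝ s) {a b c d : ℝ}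
    (hab : ∀ t ∈ s, 0 < a + b * t) (hcd : ∀ t ∈ s, 0 < c + d * t)
    (h : ∀ t ∈ s, |b| * (c + d * t) ≤ |d| * (a + b * t)) :
    ConvexOn ℝ s fun t => Real.log (a + b * t) - Real.log (c + d * t) := by
  have haff : ∀ p q t : ℝ, HasDerivAt (fun t => p + q * t) q t := fun p q t => by
    simpa using ((hasDerivAt_id t).const_mul q).const_add p
  refine convexOn_of_hasDerivWithinAt2_nonneg
    (f' := fun t => b / (a + b * t) - d / (c + d * t))
    (f'' := fun t => -(b * b) / (a + b * t) ^ 2 - -(d * d) / (c + d * t) ^ 2) hs ?_ ?_ ?_ ?_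
  · intro t ht
    exact (((haff a b t).log (hab t ht).ne').sub
      ((haff c d t).log (hcd t ht).ne')).continuousAt.continuousWithinAt
  · intro t ht
    have ht := interior_subset ht
    exact (((haff a b t).log (hab t ht).ne').sub
      ((haff c d t).log (hcd t ht).ne')).hasDerivWithinAt
  · intro t ht
    have ht := interior_subset ht
    have hdiv : ∀ p q : ℝ, p + q * t ≠ 0 →
        HasDerivAt (fun t => q / (p + q * t)) (-(q * q) / (p + q * t) ^ 2) t := fun p q hpq => by
      simpa using (hasDerivAt_const t q).fun_div (haff p q t) hpq
    exact ((hdiv a b (hab t ht).ne').sub (hdiv c d (hcd t ht).ne')).hasDerivWithinAt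
  · intro t ht
    have ht := interior_subset ht
    have hA := hab t ht
    have hC := hcd t ht
    have hself := mul_self_le_mul_self (mul_nonneg (abs_nonneg b) hC.le) (h t ht)
    have hb := abs_mul_abs_self b
    have hd := abs_mul_abs_self d
    have hmul : b * b * (c + d * t) ^ 2 ≤ d * d * (a + b * t) ^ 2 := by
      rw [← hb, ← hd]; linarith
    have := (div_le_div_iff₀ (pow_pos hA 2) (pow_pos hC 2)).2 hmul
    rw [neg_div, neg_div]
    linarith

theorem convexOn_neg_log_affine {s : Set ℝ} (hs : Convex ℝ s) {c d : ℝ}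
    (hcd : ∀ t ∈ s, 0 < c + d * t) : ConvexOn ℝ s fun t => -Real.log (c + d * t) := by
  simpa using convexOn_log_sub_log_affine hs (a := 1) (b := 0) (by simp) hcd
    (by simp)

theorem convexOn_affine {s : Set ℝ} (hs : Convex ℝ s) (p q : ℝ) :
    ConvexOn ℝ s fun t => p + q * t := by
  refine ⟨hs, fun x _ y _ a b _ _ hab => le_of_eq ?_⟩
  simp only [smul_eq_mul]
  linear_combination (-p) * hab

/-- The logarithm of `h_x² / h_{x+2}²`. -/
noncomputable def logHsqRatio (lam x : ℝ) : ℝ :=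
  Real.log (x + 2 + lam) + Real.log (x + 1) + Real.log (x + 2) - Real.log (x + lam)
    - Real.log (x + 2 * lam) - Real.log (x + 2 * lam + 1)

theorem logHsqRatio_compare_left {lam x : ℝ} (hlam : -(1/2 : ℝ) < lam) (hx : 1 ≤ x) :
    (lam ≤ 0 ∨ 1 ≤ lam →
      (2 * lam - 2) * (Real.log x - Real.log (x + 2)) ≤ logHsqRatio lam x) ∧
    (0 ≤ lam → lam ≤ 1 →
      logHsqRatio lam x ≤ (2 * lam - 2) * (Real.log x - Real.log (x + 2))) := by
  set δ := Real.log x - Real.log (x + 2) with hδ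
  have hs : Convex ℝ (Set.Ioi (-(1/2 : ℝ))) := convex_Ioi _
  have hconv := (((convexOn_log_sub_log_affine hs (a := x + 2) (b := 1) (c := x) (d := 1)
      (fun t ht => by have := Set.mem_Ioi.1 ht; linarith)
      (fun t ht => by have := Set.mem_Ioi.1 ht; linarith)
      (fun t ht => by norm_num)).add
    (convexOn_neg_log_affine hs (c := x) (d := 2)
      (fun t ht => by have := Set.mem_Ioi.1 ht; linarith))).add
    (convexOn_neg_log_affine hs (c := x + 1) (d := 2)
      (fun t ht => by have := Set.mem_Ioi.1 ht; linarith))).add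
    (convexOn_affine hs (Real.log (x + 1) + Real.log (x + 2) + 2 * δ) (-2 * δ))
  have key := hconv.sign_of_zero_one (t := lam) (by simp) (by norm_num)
    (by simp [hδ]; ring)
    (by
      simp only [Pi.add_apply]
      rw [show x + 1 + 2 * 1 = x + 2 + 1 * 1 by ring, show x + 1 * 1 = x + 1 by ring,
        show x + 2 * 1 = x + 2 by ring]
      ring)
    hlam
  have heq : logHsqRatio lam x - (2 * lam - 2) * δ =
      Real.log (x + 2 + 1 * lam) - Real.log (x + 1 * lam) + -Real.log (x + 2 * lam)
        + -Real.log (x + 1 + 2 * lam)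
        + (Real.log (x + 1) + Real.log (x + 2) + 2 * δ + -2 * δ * lam) := by
    rw [logHsqRatio, one_mul, show x + 1 + 2 * lam = x + 2 * lam + 1 by ring]
    ring
  simp only [Pi.add_apply] at key
  rw [← heq] at key
  exact ⟨fun h => by linarith [key.1 h], fun h h' => by linarith [key.2 h h']⟩

theorem logHsqRatio_compare_right_of_pos {lam x : ℝ} (hlam : 0 < lam) (hx : 1 ≤ x) :
    (1 ≤ lam → logHsqRatio lam x ≤
      (2 * lam - 2) * (Real.log (x + 2 * lam) - Real.log (x + 2 * lam + 2))) ∧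
    (lam ≤ 1 →
      (2 * lam - 2) * (Real.log (x + 2 * lam) - Real.log (x + 2 * lam + 2))
        ≤ logHsqRatio lam x) := by
  obtain ⟨u, hu⟩ : ∃ u, u = x + 2 * lam := ⟨_, rfl⟩
  rw [← hu]
  set δ := Real.log u - Real.log (u + 2) with hδ
  have hs : Convex ℝ (Set.Icc 0 (max 1 lam)) := convex_Icc _ _
  have hbound : ∀ t ∈ Set.Icc 0 (max 1 lam), 0 ≤ t ∧ t < u ∧ 2 * t < u + 1 := by
    rintro t ⟨h0, h1⟩
    rcases le_max_iff.1 h1 with h | h <;> refine ⟨h0, ?_, ?_⟩ <;> linarith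
  have hconv := (((convexOn_log_sub_log_affine hs (a := u) (b := -1) (c := u + 1) (d := -2)
      (fun t ht => by have := hbound t ht; linarith)
      (fun t ht => by have := hbound t ht; linarith)
      (fun t ht => by have := hbound t ht; norm_num; linarith)).add
    (convexOn_neg_log_affine hs (c := u + 2) (d := -1)
      (fun t ht => by have := hbound t ht; linarith))).add
    (convexOn_neg_log_affine hs (c := u + 2) (d := -2)
      (fun t ht => by have := hbound t ht; linarith))).add
    (convexOn_affine hs (Real.log u + Real.log (u + 1) - 2 * δ) (2 * δ))
  have key := hconv.sign_of_zero_one (t := lam) (by simp) (by simp)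
    (by simp [hδ]; ring)
    (by
      simp only [Pi.add_apply]
      rw [show u + 1 + -2 * 1 = u + -1 * 1 by ring, show u + 2 + -1 * 1 = u + 1 by ring,
        show u + 2 + -2 * 1 = u by ring]
      ring)
    ⟨hlam.le, le_max_right _ _⟩
  have heq : (2 * lam - 2) * δ - logHsqRatio lam x =
      Real.log (u + -1 * lam) - Real.log (u + 1 + -2 * lam) + -Real.log (u + 2 + -1 * lam)
        + -Real.log (u + 2 + -2 * lam)
        + (Real.log u + Real.log (u + 1) - 2 * δ + 2 * δ * lam) := by
    rw [logHsqRatio, ← hu, show u + -1 * lam = x + lam by linarith,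
      show u + 1 + -2 * lam = x + 1 by linarith, show u + 2 + -1 * lam = x + 2 + lam by linarith,
      show u + 2 + -2 * lam = x + 2 by linarith]
    ring
  simp only [Pi.add_apply] at key
  rw [← heq] at key
  exact ⟨fun h => by linarith [key.1 (Or.inr h)], fun h => by linarith [key.2 hlam.le h]⟩

theorem Real.log_sub_log_le_div {p q : ℝ} (hp : 0 < p) (hq : 0 < q) :
    Real.log p - Real.log q ≤ (p - q) / q := by
  rw [← Real.log_div hp.ne' hq.ne', sub_div, div_self hq.ne']
  exact Real.log_le_sub_one_of_pos (div_pos hp hq)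

theorem logHsqRatio_le_right_of_nonpos {lam x : ℝ} (hlam : lam ≤ 0) (hx : 0 < x + 2 * lam) :
    logHsqRatio lam x ≤
      (2 * lam - 2) * (Real.log (x + 2 * lam) - Real.log (x + 2 * lam + 2)) := by
  obtain ⟨u, hu⟩ : ∃ u, u = x + 2 * lam := ⟨_, rfl⟩
  rw [logHsqRatio, ← hu]
  rw [← hu] at hx
  have hone := Real.log_sub_log_le_div (p := x + 1) (q := u + 1) (by linarith) (by linarith)
  have htwo := Real.log_sub_log_le_div (p := x + 2) (q := u + 2) (by linarith) (by linarith)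
  have hthree := Real.log_sub_log_le_div hx (show 0 < u + 1 by linarith)
  have hfour := Real.log_sub_log_le_div (show 0 < u + 1 by linarith) (show 0 < u + 2 by linarith)
  have hmono : Real.log (x + 2 + lam) + Real.log u ≤ Real.log (u + 2) + Real.log (x + lam) := by
    rw [← Real.log_mul (by linarith) hx.ne', ← Real.log_mul (by linarith) (by linarith)]
    exact Real.log_le_log (mul_pos (by linarith) hx) (by nlinarith)
  have hx1 : (x + 1 - (u + 1)) / (u + 1) = 2 * lam * ((u - (u + 1)) / (u + 1)) := by
    rw [hu]; ring
  have hx2 : (x + 2 - (u + 2)) / (u + 2) = 2 * lam * ((u + 1 - (u + 2)) / (u + 2)) := by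
    rw [hu]; ring
  rw [hx1] at hone
  rw [hx2] at htwo
  have h2 : 2 * lam ≤ 0 := by linarith
  have h3 := mul_le_mul_of_nonpos_left hthree h2
  have h4 := mul_le_mul_of_nonpos_left hfour h2
  linarith

theorem hsq_pos {lam x : ℝ} (hlam : -(1/2 : ℝ) < lam) (hx : 1 ≤ x) : 0 < hsq lam x :=
  div_pos (Real.Gamma_pos_of_pos (by linarith))
    (mul_pos (by linarith) (Real.Gamma_pos_of_pos (by linarith)))

theorem log_hsq_sub_log_hsq_add_two {lam x : ℝ} (hlam : -(1/2 : ℝ) < lam) (hx : 1 ≤ x) :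
    Real.log (hsq lam x) - Real.log (hsq lam (x + 2)) = logHsqRatio lam x := by
  have h1 : x + 2 * lam ≠ 0 := by linarith
  have h2 : x + 2 * lam + 1 ≠ 0 := by linarith
  have h3 : x + 1 ≠ 0 := by linarith
  have h4 : x + 2 ≠ 0 := by linarith
  have h5 : x + lam ≠ 0 := by linarith
  have h6 : x + 2 + lam ≠ 0 := by linarith
  have hG1 : Real.Gamma (x + 2 * lam) ≠ 0 := (Real.Gamma_pos_of_pos (by linarith)).ne'
  have hG2 : Real.Gamma (x + 1) ≠ 0 := (Real.Gamma_pos_of_pos (by linarith)).ne'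
  have hrec1 : Real.Gamma (x + 2 + 2 * lam) =
      (x + 2 * lam + 1) * ((x + 2 * lam) * Real.Gamma (x + 2 * lam)) := by
    rw [show x + 2 + 2 * lam = x + 2 * lam + 1 + 1 by ring, Real.Gamma_add_one h2,
      Real.Gamma_add_one h1]
  have hrec2 : Real.Gamma (x + 2 + 1) = (x + 2) * ((x + 1) * Real.Gamma (x + 1)) := by
    rw [Real.Gamma_add_one h4, show x + 2 = x + 1 + 1 by ring, Real.Gamma_add_one h3]
  rw [hsq, hsq, hrec1, hrec2, logHsqRatio,
    Real.log_div hG1 (mul_ne_zero h5 hG2),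
    Real.log_div (mul_ne_zero h2 (mul_ne_zero h1 hG1))
      (mul_ne_zero h6 (mul_ne_zero h4 (mul_ne_zero h3 hG2))),
    Real.log_mul h5 hG2, Real.log_mul h2 (mul_ne_zero h1 hG1), Real.log_mul h1 hG1,
    Real.log_mul h6 (mul_ne_zero h4 (mul_ne_zero h3 hG2)),
    Real.log_mul h4 (mul_ne_zero h3 hG2), Real.log_mul h3 hG2]
  ring

theorem gegBetaTilde_sq {lam : ℝ} (hlam : -(1/2 : ℝ) < lam) {i : ℕ} (hi : 1 ≤ i) :
    gegBetaTilde lam i ^ 2 = (hsq lam (2 * (i : ℝ) - 1))⁻¹ := by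
  have hi' : (1 : ℝ) ≤ i := by exact_mod_cast hi
  rw [gegBetaTilde, div_pow, Real.sq_sqrt (hsq_pos hlam (by linarith)).le, one_pow, one_div]

theorem gegBetaTilde_sq_pos {lam : ℝ} (hlam : -(1/2 : ℝ) < lam) {i : ℕ} (hi : 1 ≤ i) :
    0 < gegBetaTilde lam i ^ 2 := by
  have hi' : (1 : ℝ) ≤ i := by exact_mod_cast hi
  rw [gegBetaTilde_sq hlam hi]
  exact inv_pos.2 (hsq_pos hlam (by linarith))

theorem log_gegBetaTilde_sq_succ_sub {lam : ℝ} (hlam : -(1/2 : ℝ) < lam) {i : ℕ} (hi : 1 ≤ i) :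
    Real.log (gegBetaTilde lam (i + 1) ^ 2) - Real.log (gegBetaTilde lam i ^ 2) =
      logHsqRatio lam (2 * (i : ℝ) - 1) := by
  have hi' : (1 : ℝ) ≤ i := by exact_mod_cast hi
  rw [gegBetaTilde_sq hlam hi, gegBetaTilde_sq hlam (by omega : 1 ≤ i + 1), Real.log_inv,
    Real.log_inv, ← log_hsq_sub_log_hsq_add_two hlam (by linarith),
    show 2 * ((i + 1 : ℕ) : ℝ) - 1 = 2 * (i : ℝ) - 1 + 2 by push_cast; ring]
  ring

theorem log_sub_log_eq_of_double {p q : ℝ} (hp : p ≠ 0) (hq : q ≠ 0) :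
    Real.log (2 * p) - Real.log (2 * q) = Real.log p - Real.log q := by
  rw [Real.log_mul two_ne_zero hp, Real.log_mul two_ne_zero hq]
  ring

theorem le_of_le_succ_from_one {f : ℕ → ℝ} (h : ∀ i, 1 ≤ i → f i ≤ f (i + 1)) {j k : ℕ}
    (hj : 1 ≤ j) (hjk : j ≤ k) : f j ≤ f k := by
  induction k, hjk using Nat.le_induction with
  | base => exact le_rfl
  | succ n hn ih => exact ih.trans (h n (hj.trans hn))

theorem rpow_div_le_div_of_log_step {a b : ℕ → ℝ} {e : ℝ} (ha : ∀ i, 1 ≤ i → 0 < a i)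
    (hb : ∀ i, 1 ≤ i → 0 < b i)
    (h : ∀ i, 1 ≤ i → e * (Real.log (a i) - Real.log (a (i + 1))) ≤
      Real.log (b (i + 1)) - Real.log (b i)) {j k : ℕ} (hj : 1 ≤ j) (hjk : j ≤ k) :
    (a j / a k) ^ e ≤ b k / b j := by
  have hk := hj.trans hjk
  have hmono := le_of_le_succ_from_one (f := fun i => Real.log (b i) + e * Real.log (a i))
    (fun i hi => by linarith [h i hi]) hj hjk
  have hq := div_pos (ha j hj) (ha k hk)
  rw [← Real.log_le_log_iff (Real.rpow_pos_of_pos hq e) (div_pos (hb k hk) (hb j hj)),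
    Real.log_rpow hq, Real.log_div (ha j hj).ne' (ha k hk).ne',
    Real.log_div (hb k hk).ne' (hb j hj).ne']
  linarith

theorem div_le_rpow_div_of_log_step {a b : ℕ → ℝ} {e : ℝ} (ha : ∀ i, 1 ≤ i → 0 < a i)
    (hb : ∀ i, 1 ≤ i → 0 < b i)
    (h : ∀ i, 1 ≤ i → Real.log (b (i + 1)) - Real.log (b i) ≤
      e * (Real.log (a i) - Real.log (a (i + 1)))) {j k : ℕ} (hj : 1 ≤ j) (hjk : j ≤ k) :
    b k / b j ≤ (a j / a k) ^ e := by
  have hinv := rpow_div_le_div_of_log_step (b := fun i => (b i)⁻¹) (e := -e) ha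
    (fun i hi => inv_pos.2 (hb i hi))
    (fun i hi => by simp only [Real.log_inv]; linarith [h i hi]) hj hjk
  have hk := hj.trans hjk
  have hq := div_pos (ha j hj) (ha k hk)
  rw [Real.rpow_neg hq.le, inv_div_inv, ← inv_div (b k) (b j)] at hinv
  exact (inv_le_inv₀ (Real.rpow_pos_of_pos hq e) (div_pos (hb k hk) (hb j hj))).1 hinv

theorem betaTilde_ratio_bounds (lam : ℝ) (hlam : -(1/2 : ℝ) < lam)
    (j k : ℕ) (hj : 1 ≤ j) (hjk : j < k) :
    ((lam ≤ 0 ∨ 1 ≤ lam) →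
      (((j : ℝ) - 1/2)/((k : ℝ) - 1/2)) ^ (2*lam - 2)
          ≤ (gegBetaTilde lam k)^2 / (gegBetaTilde lam j)^2 ∧
      (gegBetaTilde lam k)^2 / (gegBetaTilde lam j)^2
          ≤ (((j : ℝ) - 1/2 + lam)/((k : ℝ) - 1/2 + lam)) ^ (2*lam - 2)) ∧
    (0 < lam → lam ≤ 1 →
      (((j : ℝ) - 1/2 + lam)/((k : ℝ) - 1/2 + lam)) ^ (2*lam - 2)
          ≤ (gegBetaTilde lam k)^2 / (gegBetaTilde lam j)^2 ∧
      (gegBetaTilde lam k)^2 / (gegBetaTilde lam j)^2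
          ≤ (((j : ℝ) - 1/2)/((k : ℝ) - 1/2)) ^ (2*lam - 2)) := by
  have hcast : ∀ i : ℕ, 1 ≤ i → (1 : ℝ) ≤ i := fun i hi => by exact_mod_cast hi
  have hx : ∀ i : ℕ, 1 ≤ i → 1 ≤ 2 * (i : ℝ) - 1 := fun i hi => by linarith [hcast i hi]
  have hb : ∀ i, 1 ≤ i → 0 < gegBetaTilde lam i ^ 2 := fun i hi => gegBetaTilde_sq_pos hlam hi
  have hl : ∀ i : ℕ, 1 ≤ i → 0 < (i : ℝ) - 1/2 := fun i hi => by linarith [hcast i hi]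
  have hr : ∀ i : ℕ, 1 ≤ i → 0 < (i : ℝ) - 1/2 + lam := fun i hi => by linarith [hcast i hi]
  have hl_log : ∀ i : ℕ, 1 ≤ i →
      Real.log ((i : ℝ) - 1/2) - Real.log (((i + 1 : ℕ) : ℝ) - 1/2) =
        Real.log (2 * (i : ℝ) - 1) - Real.log (2 * (i : ℝ) - 1 + 2) := fun i hi => by
    rw [← log_sub_log_eq_of_double (hl i hi).ne' (hl (i + 1) (by omega)).ne']
    congr 2 <;> push_cast <;> ring
  have hr_log : ∀ i : ℕ, 1 ≤ i →
      Real.log ((i : ℝ) - 1/2 + lam) - Real.log (((i + 1 : ℕ) : ℝ) - 1/2 + lam) =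
        Real.log (2 * (i : ℝ) - 1 + 2 * lam) - Real.log (2 * (i : ℝ) - 1 + 2 * lam + 2) :=
    fun i hi => by
      rw [← log_sub_log_eq_of_double (hr i hi).ne' (hr (i + 1) (by omega)).ne']
      congr 2 <;> push_cast <;> ring
  refine ⟨fun h => ⟨?_, ?_⟩, fun h0 h1 => ⟨?_, ?_⟩⟩
  · refine rpow_div_le_div_of_log_step (a := fun i => (i : ℝ) - 1/2)
      (b := fun i => gegBetaTilde lam i ^ 2) hl hb (fun i hi => ?_) hj hjk.le
    rw [hl_log i hi, log_gegBetaTilde_sq_succ_sub hlam hi]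
    exact (logHsqRatio_compare_left hlam (hx i hi)).1 h
  · refine div_le_rpow_div_of_log_step (a := fun i => (i : ℝ) - 1/2 + lam)
      (b := fun i => gegBetaTilde lam i ^ 2) hr hb (fun i hi => ?_) hj hjk.le
    rw [hr_log i hi, log_gegBetaTilde_sq_succ_sub hlam hi]
    rcases h with h | h
    · exact logHsqRatio_le_right_of_nonpos h (by linarith [hx i hi])
    · exact (logHsqRatio_compare_right_of_pos (by linarith) (hx i hi)).1 h
  · refine rpow_div_le_div_of_log_step (a := fun i => (i : ℝ) - 1/2 + lam)
      (b := fun i => gegBetaTilde lam i ^ 2) hr hb (fun i hi => ?_) hj hjk.le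
    rw [hr_log i hi, log_gegBetaTilde_sq_succ_sub hlam hi]
    exact (logHsqRatio_compare_right_of_pos h0 (hx i hi)).2 h1
  · refine div_le_rpow_div_of_log_step (a := fun i => (i : ℝ) - 1/2)
      (b := fun i => gegBetaTilde lam i ^ 2) hl hb (fun i hi => ?_) hj hjk.le
    rw [hl_log i hi, log_gegBetaTilde_sq_succ_sub hlam hi]
    exact (logHsqRatio_compare_left hlam (hx i hi)).2 h0.le h1
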